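/- Let (X,r) be a non-degenerate involutive set-theoretic solution with X = {x_1,…,x_n} finite, of class m, with structure group G(X,r), maps φ and π, matrix representation ψ : G(X,r) → GL_{n+1}(ℝ), and frozen elements θ_{x_k}. Then for every 1 ≤ k ≤ n, ψ(θ_{x_k}) = ψ(1) + m·E_k; in particular E_k = (1/m)(ψ(θ_{x_k}) − ψ(1)), so each E_k lies in the ℝ-linear span of {ψ(θ_{x_1}),…,ψ(θ_{x_n}), ψ(1)} in M_{n+1}(ℝ). -/

import Mathlib

open scoped BigOperators

section YB

variable {X : Type*}

/-- `r¹² = r × id` acting on the first two components of `X³`. -/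
def r12 (r : X × X → X × X) : X × X × X → X × X × X :=
  fun p => ((r (p.1, p.2.1)).1, (r (p.1, p.2.1)).2, p.2.2)

/-- `r²³ = id × r` acting on the last two components of `X³`. -/
def r23 (r : X × X → X × X) : X × X × X → X × X × X :=
  fun p => (p.1, r (p.2.1, p.2.2))

/-- A set-theoretic solution of the Yang–Baxter equation: a bijection
`r : X × X → X × X` satisfying the braid relation `r¹² r²³ r¹² = r²³ r¹² r²³`. -/
structure YBSol (X : Type*) where
  r : X × X → X × X
  bij : Function.Bijective r
  braid : r12 r ∘ r23 r ∘ r12 r = r23 r ∘ r12 r ∘ r23 r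

namespace YBSol

variable (S : YBSol X)

/-- `σ_x(y)`, the first component of `r(x,y)`. -/
def σ (x y : X) : X := (S.r (x, y)).1

/-- `γ_y(x)`, the second component of `r(x,y)`. -/
def γ (y x : X) : X := (S.r (x, y)).2

/-- Non-degeneracy: all the maps `σ_x` and `γ_y` are bijections of `X`. -/
def NonDeg : Prop :=
  (∀ x, Function.Bijective (S.σ x)) ∧ (∀ y, Function.Bijective (S.γ y))

/-- Involutivity: `r ∘ r = id`. -/
def Invol : Prop := S.r ∘ S.r = id

/-- The defining relations `x·y = σ_x(y)·γ_y(x)` of the structure group. -/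
def rels : Set (FreeGroup X) :=
  { w | ∃ x y : X,
      w = FreeGroup.of x * FreeGroup.of y *
        (FreeGroup.of (S.σ x y) * FreeGroup.of (S.γ y x))⁻¹ }

/-- The structure group `G(X,r) = Gp⟨X ∣ x·y = σ_x(y)·γ_y(x)⟩`. -/
abbrev G := PresentedGroup S.rels

/-- The image of a generator `x ∈ X` in the structure group. -/
def gen (x : X) : S.G := PresentedGroup.of x

end YBSol

/-- `sigIter S D k x` is the composite `σ_x ∘ σ_{D(x)} ∘ ⋯ ∘ σ_{D^{k-1}(x)}`. -/
def sigIter (S : YBSol X) (D : X → X) : ℕ → X → X → X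
  | 0, _ => id
  | k + 1, x => S.σ x ∘ sigIter S D k (D x)

end YB

section Mat

/-- The `(n+1) × (n+1)` real matrix with the permutation matrix of `p` in the upper-left
`n × n` block, the vector `v` in the first `n` entries of the last column, and last
row `(0,…,0,1)`. -/
noncomputable def matOf {n : ℕ} (p : Equiv.Perm (Fin n)) (v : Fin n → ℤ) :
    Matrix (Fin (n + 1)) (Fin (n + 1)) ℝ :=
  Matrix.of fun i j =>
    if hi : (i : ℕ) < n then
      if hj : (j : ℕ) < n then (if p ⟨j, hj⟩ = ⟨i, hi⟩ then (1 : ℝ) else 0)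
      else ((v ⟨i, hi⟩ : ℤ) : ℝ)
    else if (j : ℕ) < n then 0 else 1

/-- `E_k`: the `(n+1) × (n+1)` matrix with entry `1` in position `(k, n+1)` and `0` elsewhere. -/
noncomputable def EMat (n : ℕ) (k : Fin n) : Matrix (Fin (n + 1)) (Fin (n + 1)) ℝ :=
  Matrix.single (Fin.castSucc k) (Fin.last n) 1

end Mat

/-!
Write `θ` for the frozen element of length `m` starting with `x`. The cocycle rule gives
`π(x h) = t_x + x • π(h)`, and `x` sends `D x` back to `x`, so if `π(h)` is a multiple of `t_{D x}`
then `π(x h)` is a multiple of `t_x`, with coefficient one larger; hence `π(θ) = m t_x`. Being of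
class `m` says that `φ(θ) = 1`. Thus `ψ(θ)` and `ψ(1)` differ only by `m t_x` in the last column.
-/

section PermCocycle

variable {Γ X A : Type*} [Monoid Γ] [AddCommMonoid A]

/-- `π` is a 1-cocycle of `Γ` with values in the permutation module of finitely supported functions
`X →₀ A`, on which `Γ` acts through `φ`. The action is spelled out as `Finsupp.mapDomain` rather
than as an instance, since it depends on the choice of `φ`. -/
def IsPermCocycle (φ : Γ →* Equiv.Perm X) (π : Γ → X →₀ A) : Prop :=
  ∀ g h : Γ, π (g * h) = π g + Finsupp.mapDomain (φ g) (π h)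

theorem IsPermCocycle.map_one [IsLeftCancelAdd A] {φ : Γ →* Equiv.Perm X} {π : Γ → X →₀ A}
    (hπ : IsPermCocycle φ π) : π 1 = 0 := by
  have h : π 1 = π 1 + π 1 := by
    simpa only [mul_one, _root_.map_one, Equiv.Perm.coe_one, Finsupp.mapDomain_id] using hπ 1 1
  exact left_eq_add.mp h

end PermCocycle

namespace YBSol

variable {X : Type*} (S : YBSol X) (D : X → X)

/-- The frozen element `x · D(x) ⋯ D^{m-1}(x)` of length `m` starting with `x`, for an arbitrary
self-map `D` of `X`. -/
def frozen (m : ℕ) (x : X) : S.G :=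
  ((List.range m).map fun i => S.gen (D^[i] x)).prod

theorem frozen_zero (x : X) : S.frozen D 0 x = 1 := rfl

theorem frozen_succ (m : ℕ) (x : X) :
    S.frozen D (m + 1) x = S.gen x * S.frozen D m (D x) := by
  simp only [frozen, List.range_succ_eq_map, List.map_cons, List.prod_cons, List.map_map]
  rfl

variable {S D} {φ : S.G →* Equiv.Perm X}

theorem map_frozen_apply (hφ : ∀ x y, φ (S.gen x) y = S.σ x y) (m : ℕ) (x y : X) :
    φ (S.frozen D m x) y = sigIter S D m x y := by
  induction m generalizing x with
  | zero => rw [frozen_zero, map_one, Equiv.Perm.one_apply, sigIter, id]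
  | succ m ih => rw [frozen_succ, map_mul, Equiv.Perm.mul_apply, ih, hφ, sigIter, Function.comp]

theorem map_frozen_eq_one (hφ : ∀ x y, φ (S.gen x) y = S.σ x y) {m : ℕ} {x : X}
    (hm : ∀ y, sigIter S D m x y = y) : φ (S.frozen D m x) = 1 :=
  Equiv.ext fun y => (map_frozen_apply hφ m x y).trans (hm y)

theorem cocycle_frozen {A : Type*} [AddCommMonoidWithOne A] [IsLeftCancelAdd A]
    (hφ : ∀ x y, φ (S.gen x) y = S.σ x y) (hD : ∀ x, S.σ x (D x) = x)
    {π : S.G → X →₀ A} (hπ : IsPermCocycle φ π)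
    (hπgen : ∀ x, π (S.gen x) = Finsupp.single x 1) (m : ℕ) (x : X) :
    π (S.frozen D m x) = Finsupp.single x (m : A) := by
  induction m generalizing x with
  | zero => rw [frozen_zero, hπ.map_one, Nat.cast_zero, Finsupp.single_zero]
  | succ m ih =>
    calc π (S.frozen D (m + 1) x)
        = Finsupp.single x 1 + Finsupp.mapDomain (φ (S.gen x)) (Finsupp.single (D x) (m : A)) := by
          rw [frozen_succ, hπ, hπgen, ih]
      _ = Finsupp.single x 1 + Finsupp.single x (m : A) := by
          rw [Finsupp.mapDomain_single, hφ, hD]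
      _ = Finsupp.single x ((m + 1 : ℕ) : A) := by
          rw [← Finsupp.single_add, Nat.cast_succ, add_comm]

end YBSol

section Mat

variable {n : ℕ} (p : Equiv.Perm (Fin n)) (v : Fin n → ℤ)

theorem matOf_castSucc_castSucc (i j : Fin n) :
    matOf p v i.castSucc j.castSucc = if p j = i then 1 else 0 := by
  simp [matOf]

theorem matOf_castSucc_last (i : Fin n) : matOf p v i.castSucc (Fin.last n) = v i := by
  simp [matOf]

theorem matOf_last (j : Fin (n + 1)) :
    matOf p v (Fin.last n) j = if (j : ℕ) < n then 0 else 1 := by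
  simp [matOf]

theorem matOf_add_single (k : Fin n) (a : ℤ) :
    matOf p (v + Pi.single k a) = matOf p v + (a : ℝ) • EMat n k := by
  ext i j
  cases i using Fin.lastCases with
  | last => simp [matOf_last, EMat]
  | cast i =>
    cases j using Fin.lastCases with
    | last => simp [matOf_castSucc_last, EMat, Matrix.single_apply, Pi.single_apply, eq_comm]
    | cast j => simp [matOf_castSucc_castSucc, EMat, (Fin.castSucc_ne_last j).symm]

end Mat

theorem YBSol.matOf_frozen {n : ℕ} {S : YBSol (Fin n)} {D : Fin n → Fin n}
    {φ : S.G →* Equiv.Perm (Fin n)} (hφ : ∀ x y, φ (S.gen x) y = S.σ x y)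
    {π : S.G → Fin n →₀ ℤ} (hπ : IsPermCocycle φ π)
    (hπgen : ∀ x, π (S.gen x) = Finsupp.single x 1) (hD : ∀ x, S.σ x (D x) = x)
    {m : ℕ} {k : Fin n} (hm : ∀ y, sigIter S D m k y = y) :
    matOf (φ (S.frozen D m k)) (π (S.frozen D m k)) =
      matOf (φ 1) (π 1) + (m : ℝ) • EMat n k := by
  have hφθ : φ (S.frozen D m k) = φ 1 := by rw [map_frozen_eq_one hφ hm, map_one]
  have hπθ : ⇑(π (S.frozen D m k)) = ⇑(π 1) + Pi.single k (m : ℤ) := by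
    rw [cocycle_frozen hφ hD hπ hπgen, hπ.map_one, Finsupp.coe_zero, zero_add,
      Finsupp.single_eq_pi_single]
  rw [hφθ, hπθ, matOf_add_single, Int.cast_natCast]

/-- `ψ(θ_k) = ψ(1) + m·E_k`; in particular `E_k = (1/m)(ψ(θ_k) − ψ(1))`, so each
`E_k` lies in the real span of `{ψ(θ_1),…,ψ(θ_n), ψ(1)}`. -/
theorem EMat_in_span (n : ℕ) (S : YBSol (Fin n))
    (hnd : S.NonDeg) (hinv : S.Invol)
    (φ : S.G →* Equiv.Perm (Fin n)) (hφ : ∀ x y : Fin n, φ (S.gen x) y = S.σ x y)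
    (π : S.G → (Fin n →₀ ℤ)) (hπbij : Function.Bijective π)
    (hπgen : ∀ x : Fin n, π (S.gen x) = Finsupp.single x 1)
    (hπcoc : ∀ g h : S.G, π (g * h) = π g + Finsupp.mapDomain (⇑(φ g)) (π h))
    (D : Fin n → Fin n) (hD : ∀ x, S.σ x (D x) = x)
    (m : ℕ) (hm1 : 1 ≤ m) (hm : ∀ x y : Fin n, sigIter S D m x y = y)
    (θ : Fin n → S.G)
    (hθ : ∀ x : Fin n, θ x = (((List.range m).map fun i => S.gen (D^[i] x)).prod))
    (M : S.G → Matrix (Fin (n + 1)) (Fin (n + 1)) ℝ)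
    (hM : ∀ g : S.G, M g = matOf (φ g) (fun i => π g i)) :
    ∀ k : Fin n,
      M (θ k) = M 1 + (m : ℝ) • EMat n k ∧
      EMat n k = ((m : ℝ))⁻¹ • (M (θ k) - M 1) ∧
      EMat n k ∈ Submodule.span ℝ
        ({M 1} ∪ Set.range fun j : Fin n => M (θ j)) := by
  intro k
  have hψ : M (θ k) = M 1 + (m : ℝ) • EMat n k := by
    rw [hM, hM, hθ]
    exact YBSol.matOf_frozen hφ hπcoc hπgen hD (hm k)
  have hm0 : (m : ℝ) ≠ 0 := Nat.cast_ne_zero.2 (Nat.one_le_iff_ne_zero.1 hm1)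
  have hE : EMat n k = (m : ℝ)⁻¹ • (M (θ k) - M 1) :=
    (eq_inv_smul_iff₀ hm0).2 (eq_sub_of_add_eq' hψ.symm)
  refine ⟨hψ, hE, ?_⟩
  rw [hE]
  exact Submodule.smul_mem _ _ <| Submodule.sub_mem _
    (Submodule.subset_span (Or.inr ⟨k, rfl⟩)) (Submodule.subset_span (Or.inl rfl))
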